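/- arXiv:2305.12553 — 4 statements merged into one kernel-verified Lean document; each statement's English description precedes it below -/
import Mathlib

section
/- (Policy improvement for unilateral proximal updates in Markov α-potential games.) Suppose the finite Markov game is a Markov α-potential game with α-potential function Φ. Let η > 0, let π be a profile, and let π' be a profile such that for every player i and every state s, π_i'(s) maximizes p ↦ ∑_{a_i} p(a_i)·Q_i(s,a_i;π) − (1/(2η))·‖p − π_i(s)‖₂² over the probability simplex Δ(A_i). Then for every probability distribution ν on S: ∑_{i∈I} ( Φ(ν,(π_i',π_{-i})) − Φ(ν,π) ) ≥ (1/(2η(1−δ)))·∑_{i∈I} ∑_{s∈S} d_ν^{(π_i',π_{-i})}(s)·‖π_i'(s) − π_i(s)‖₂² − |I|·α. -/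
open Finset

section MarkovGameDefs

variable {S : Type*} {I : Type*} {A : I → Type*}

/-- A probability vector on a finite set. -/
def IsProbVec {α : Type*} [Fintype α] (p : α → ℝ) : Prop :=
  (∀ a, 0 ≤ p a) ∧ ∑ a, p a = 1

/-- A stationary policy profile: each player's policy gives a probability vector at each state. -/
def IsPolicy [Fintype I] [∀ i, Fintype (A i)] (π : ∀ i, S → A i → ℝ) : Prop :=
  ∀ i s, IsProbVec (π i s)

/-- A transition kernel. -/
def IsKernel [Fintype S] (P : S → (∀ i, A i) → S → ℝ) : Prop :=
  ∀ s a, IsProbVec (fun s' => P s a s')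

/-- Product distribution on joint actions induced by a profile. -/
noncomputable def jointDist [Fintype I] (π : ∀ i, S → A i → ℝ) (s : S) (a : ∀ i, A i) : ℝ :=
  ∏ i, π i s (a i)

/-- Induced transition matrix `P^π`. -/
noncomputable def transMat [Fintype S] [Fintype I] [DecidableEq I] [∀ i, Fintype (A i)]
    (P : S → (∀ i, A i) → S → ℝ) (π : ∀ i, S → A i → ℝ) (s s' : S) : ℝ :=
  ∑ a : ∀ j, A j, jointDist π s a * P s a s'

/-- Expected one-stage payoff `u(s,π)`. -/
noncomputable def expPay [Fintype I] [DecidableEq I] [∀ i, Fintype (A i)]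
    (u : S → (∀ i, A i) → ℝ) (π : ∀ i, S → A i → ℝ) (s : S) : ℝ :=
  ∑ a : ∀ j, A j, jointDist π s a * u s a

/-- `V` solves the Bellman equation for payoff `u`, kernel `P`, discount `δ`, profile `π`. -/
def IsValueFun [Fintype S] [Fintype I] [DecidableEq I] [∀ i, Fintype (A i)]
    (δ : ℝ) (P : S → (∀ i, A i) → S → ℝ) (u : S → (∀ i, A i) → ℝ)
    (π : ∀ i, S → A i → ℝ) (V : S → ℝ) : Prop :=
  ∀ s, V s = expPay u π s + δ * ∑ s', transMat P π s s' * V s'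

/-- Player `i`'s Q-function, given a value function `V` for player `i` under `π`. -/
noncomputable def Qfun [Fintype S] [Fintype I] [DecidableEq I] [∀ i, Fintype (A i)]
    [∀ i, DecidableEq (A i)]
    (δ : ℝ) (P : S → (∀ i, A i) → S → ℝ) (u : S → (∀ i, A i) → ℝ)
    (π : ∀ i, S → A i → ℝ) (V : S → ℝ) (i : I) (s : S) (ai : A i) : ℝ :=
  ∑ a : ∀ j, A j,
    if a i = ai then
      (∏ j ∈ Finset.univ.erase i, π j s (a j)) * (u s a + δ * ∑ s', P s a s' * V s')
    else 0

/-- Discounted state visitation distribution `d_μ^π`. -/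
noncomputable def dvisit [Fintype S] [DecidableEq S] [Fintype I] [DecidableEq I]
    [∀ i, Fintype (A i)]
    (δ : ℝ) (P : S → (∀ i, A i) → S → ℝ) (π : ∀ i, S → A i → ℝ) (μ : S → ℝ) (s : S) : ℝ :=
  (1 - δ) * ∑' k : ℕ, δ ^ k * ∑ s0, μ s0 * ((Matrix.of (transMat P π)) ^ k) s0 s

/-- Negative entropy `ν(p) = ∑ p log p` (with the convention `0 log 0 = 0`,
which holds automatically since `Real.log 0 = 0`). -/
noncomputable def negent {α : Type*} [Fintype α] (p : α → ℝ) : ℝ :=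
  ∑ a, p a * Real.log (p a)

/-- `Ṽ` solves the Bellman equation of the `τ`-smoothed game for player `i`. -/
def IsSmoothedValueFun [Fintype S] [Fintype I] [DecidableEq I] [∀ i, Fintype (A i)]
    (δ τ : ℝ) (P : S → (∀ i, A i) → S → ℝ) (u : S → (∀ i, A i) → ℝ)
    (π : ∀ i, S → A i → ℝ) (i : I) (Vt : S → ℝ) : Prop :=
  ∀ s, Vt s = expPay u π s - τ * negent (π i s) + δ * ∑ s', transMat P π s s' * Vt s'

/-- Smoothed Q-function `Q̃_i(s,a_i;π)`. -/
noncomputable def Qsmooth [Fintype S] [Fintype I] [DecidableEq I] [∀ i, Fintype (A i)]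
    [∀ i, DecidableEq (A i)]
    (δ τ : ℝ) (P : S → (∀ i, A i) → S → ℝ) (u : S → (∀ i, A i) → ℝ)
    (π : ∀ i, S → A i → ℝ) (Vt : S → ℝ) (i : I) (s : S) (ai : A i) : ℝ :=
  ∑ a : ∀ j, A j,
    if a i = ai then
      (∏ j ∈ Finset.univ.erase i, π j s (a j)) *
        (u s a - τ * negent (π i s) + δ * ∑ s', P s a s' * Vt s')
    else 0

/-- Euclidean (ℓ²) norm on `α → ℝ`. -/
noncomputable def l2norm {α : Type*} [Fintype α] (f : α → ℝ) : ℝ :=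
  Real.sqrt (∑ a, f a ^ 2)

/-- Standard inner product on `α → ℝ`. -/
noncomputable def dotp {α : Type*} [Fintype α] (f g : α → ℝ) : ℝ :=
  ∑ a, f a * g a

/-- `y` is the Euclidean orthogonal projection of `x` onto the probability simplex. -/
noncomputable def IsProjSimplex {α : Type*} [Fintype α] (x y : α → ℝ) : Prop :=
  IsProbVec y ∧ ∀ z, IsProbVec z → l2norm (fun a => y a - x a) ≤ l2norm (fun a => z a - x a)

/-- Softmax (smoothed best response) with temperature `τ`. -/
noncomputable def softmax {α : Type*} [Fintype α] (τ : ℝ) (q : α → ℝ) (a : α) : ℝ :=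
  Real.exp (q a / τ) / ∑ a', Real.exp (q a' / τ)

end MarkovGameDefs

theorem aux_Q
    {S I : Type*} [Fintype S] [Fintype I] [DecidableEq I]
    {A : I → Type*} [∀ i, Fintype (A i)] [∀ i, DecidableEq (A i)]
    (δ : ℝ) (P : S → (∀ i, A i) → S → ℝ) (u : S → (∀ i, A i) → ℝ)
    (π : ∀ j, S → A j → ℝ) (V : S → ℝ) (i : I) (p : S → A i → ℝ) (s : S) :
    expPay u (Function.update π i p) s
      + δ * ∑ s', transMat P (Function.update π i p) s s' * V s'
      = ∑ ai, p s ai * Qfun δ P u π V i s ai := by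
  have hj : ∀ a : ∀ j, A j, jointDist (Function.update π i p) s a
      = p s (a i) * ∏ j ∈ Finset.univ.erase i, π j s (a j) := by
    intro a
    unfold jointDist
    rw [← Finset.mul_prod_erase _ _ (Finset.mem_univ i)]
    congr 1
    · simp
    · apply Finset.prod_congr rfl
      intro j hj
      rw [Function.update_of_ne (Finset.ne_of_mem_erase hj)]
  have h1 : ∑ s', transMat P (Function.update π i p) s s' * V s'
      = ∑ a : ∀ j, A j, jointDist (Function.update π i p) s a * ∑ s', P s a s' * V s' := by
    unfold transMat
    simp_rw [Finset.sum_mul, Finset.mul_sum]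
    rw [Finset.sum_comm]
    simp_rw [mul_assoc]
  rw [h1]
  unfold expPay Qfun
  simp_rw [Finset.mul_sum (s := (Finset.univ : Finset (∀ j, A j)))]
  rw [Finset.sum_comm, ← Finset.sum_add_distrib]
  apply Finset.sum_congr rfl
  intro a _
  simp only [mul_ite, mul_zero, Finset.sum_ite_eq, Finset.mem_univ, if_true]
  rw [hj]
  ring

theorem aux_pow {S : Type*} [Fintype S] [DecidableEq S] (M : Matrix S S ℝ)
    (h0 : ∀ s t, 0 ≤ M s t) (h1 : ∀ s, ∑ t, M s t = 1) (k : ℕ) :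
    (∀ s t, 0 ≤ (M ^ k) s t) ∧ ∀ s, ∑ t, (M ^ k) s t = 1 := by
  induction k with
  | zero =>
    refine ⟨fun s t => ?_, fun s => by simp [Matrix.one_apply]⟩
    rw [pow_zero, Matrix.one_apply]; split_ifs <;> norm_num
  | succ k ih =>
    refine ⟨fun s t => ?_, fun s => ?_⟩
    · rw [pow_succ, Matrix.mul_apply]
      exact Finset.sum_nonneg fun j _ => mul_nonneg (ih.1 _ _) (h0 _ _)
    · simp_rw [pow_succ, Matrix.mul_apply]
      rw [Finset.sum_comm]
      simp_rw [← Finset.mul_sum, h1, mul_one]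
      exact ih.2 s

theorem aux_trans
    {S I : Type*} [Fintype S] [Fintype I] [DecidableEq I]
    {A : I → Type*} [∀ i, Fintype (A i)]
    (P : S → (∀ i, A i) → S → ℝ) (hP : IsKernel P)
    (σ : ∀ j, S → A j → ℝ) (hσ : IsPolicy σ) :
    (∀ s t, 0 ≤ transMat P σ s t) ∧ ∀ s, ∑ t, transMat P σ s t = 1 := by
  refine ⟨fun s t => Finset.sum_nonneg fun a _ => mul_nonneg
    (Finset.prod_nonneg fun j _ => (hσ j s).1 _) ((hP s a).1 t), fun s => ?_⟩
  unfold transMat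
  rw [Finset.sum_comm]
  have : ∀ a : ∀ j, A j, ∑ t, P s a t = 1 := fun a => (hP s a).2
  simp_rw [← Finset.mul_sum, this, mul_one]
  unfold jointDist
  rw [← Fintype.prod_sum]
  exact Finset.prod_eq_one fun j _ => (hσ j s).2

theorem aux_x {S : Type*} [Fintype S] [DecidableEq S] (M : Matrix S S ℝ)
    (h0 : ∀ s t, 0 ≤ M s t) (h1 : ∀ s, ∑ t, M s t = 1)
    (ν : S → ℝ) (hν : IsProbVec ν) (k : ℕ) (s : S) :
    0 ≤ ∑ s0, ν s0 * (M ^ k) s0 s ∧ ∑ s0, ν s0 * (M ^ k) s0 s ≤ 1 := by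
  obtain ⟨p0, p1⟩ := aux_pow M h0 h1 k
  refine ⟨Finset.sum_nonneg fun j _ => mul_nonneg (hν.1 _) (p0 _ _), ?_⟩
  rw [← hν.2]
  refine Finset.sum_le_sum fun j _ => mul_le_of_le_one_right (hν.1 _) ?_
  rw [← p1 j]
  exact Finset.single_le_sum (f := fun t => (M ^ k) j t) (fun t _ => p0 j t) (Finset.mem_univ s)

theorem aux_summ {S : Type*} [Fintype S] [DecidableEq S] (δ : ℝ) (hδ : 0 < δ) (hδ1 : δ < 1)
    (M : Matrix S S ℝ) (h0 : ∀ s t, 0 ≤ M s t) (h1 : ∀ s, ∑ t, M s t = 1)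
    (ν : S → ℝ) (hν : IsProbVec ν) (s : S) :
    Summable fun k : ℕ => δ ^ k * ∑ s0, ν s0 * (M ^ k) s0 s := by
  refine Summable.of_nonneg_of_le (fun k => mul_nonneg (by positivity)
    (aux_x M h0 h1 ν hν k s).1) (fun k => ?_) (summable_geometric_of_lt_one hδ.le hδ1)
  exact mul_le_of_le_one_right (by positivity) (aux_x M h0 h1 ν hν k s).2

theorem aux_visit {S : Type*} [Fintype S] [DecidableEq S] (δ : ℝ) (hδ : 0 < δ) (hδ1 : δ < 1)
    (M : Matrix S S ℝ) (h0 : ∀ s t, 0 ≤ M s t) (h1 : ∀ s, ∑ t, M s t = 1)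
    (ν : S → ℝ) (hν : IsProbVec ν) (W : S → ℝ) :
    ∑ s, (∑' k : ℕ, δ ^ k * ∑ s0, ν s0 * (M ^ k) s0 s) * (W s - δ * ∑ t, M s t * W t)
      = ∑ s, ν s * W s := by
  have hy : HasSum (fun k : ℕ => ∑ s, (δ ^ k * ∑ s0, ν s0 * (M ^ k) s0 s) * W s)
      (∑ s, (∑' k : ℕ, δ ^ k * ∑ s0, ν s0 * (M ^ k) s0 s) * W s) :=
    hasSum_sum fun s _ => (aux_summ δ hδ hδ1 M h0 h1 ν hν s).hasSum.mul_right _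
  have hz : HasSum (fun k : ℕ => ∑ s, (δ ^ k * ∑ s0, ν s0 * (M ^ k) s0 s) *
        (δ * ∑ t, M s t * W t))
      (∑ s, (∑' k : ℕ, δ ^ k * ∑ s0, ν s0 * (M ^ k) s0 s) * (δ * ∑ t, M s t * W t)) :=
    hasSum_sum fun s _ => (aux_summ δ hδ hδ1 M h0 h1 ν hν s).hasSum.mul_right _
  have hstep : ∀ k : ℕ, ∑ s, (δ ^ k * ∑ s0, ν s0 * (M ^ k) s0 s) * (δ * ∑ t, M s t * W t)
      = ∑ s, (δ ^ (k+1) * ∑ s0, ν s0 * (M ^ (k+1)) s0 s) * W s := by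
    intro k
    have e1 : ∀ (k : ℕ) (X : S → ℝ), ∑ s, (δ ^ k * ∑ s0, ν s0 * (M ^ k) s0 s) * X s
        = δ ^ k * (Matrix.vecMul ν (M ^ k) ⬝ᵥ X) := by
      intro k X
      simp only [dotProduct, Matrix.vecMul, Finset.mul_sum (a := δ ^ k)]
      simp only [Finset.mul_sum, Finset.sum_mul, mul_assoc]
    rw [e1 (k+1) W]
    have e2 := e1 k (fun s => δ * ∑ t, M s t * W t)
    rw [e2]
    have e3 : (fun s => δ * ∑ t, M s t * W t) = δ • (M.mulVec W) := by
      ext s; simp [Matrix.mulVec, dotProduct]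
    rw [e3, dotProduct_smul, Matrix.dotProduct_mulVec, Matrix.vecMul_vecMul, ← pow_succ, pow_succ δ]
    simp [mul_assoc]
  simp_rw [hstep] at hz
  have h2 := hz.unique ((hasSum_nat_add_iff' 1).2 hy)
  simp only [mul_sub, Finset.sum_sub_distrib]
  rw [h2]
  simp [Matrix.one_apply]

/-- **Policy improvement for unilateral proximal updates in Markov `α`-potential games.** -/
theorem proximal_policy_improvement
    {S I : Type*} [Fintype S] [Nonempty S] [DecidableEq S]
    [Fintype I] [Nonempty I] [DecidableEq I]
    {A : I → Type*} [∀ i, Fintype (A i)] [∀ i, Nonempty (A i)] [∀ i, DecidableEq (A i)]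
    (δ : ℝ) (hδ : 0 < δ) (hδ1 : δ < 1)
    (P : S → (∀ i, A i) → S → ℝ) (hP : IsKernel P)
    (u : I → S → (∀ i, A i) → ℝ)
    (α : ℝ) (hα : 0 ≤ α)
    (V : I → (∀ j, S → A j → ℝ) → S → ℝ)
    (hV : ∀ i π, IsPolicy π → IsValueFun δ P (u i) π (V i π))
    (Φ : (∀ j, S → A j → ℝ) → S → ℝ)
    (hpot : ∀ (s : S) (i : I) (π : ∀ j, S → A j → ℝ), IsPolicy π →
      ∀ (πi' : S → A i → ℝ), (∀ s', IsProbVec (πi' s')) →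
        |(Φ (Function.update π i πi') s - Φ π s) -
          (V i (Function.update π i πi') s - V i π s)| ≤ α)
    (η : ℝ) (hη : 0 < η)
    (π π' : ∀ j, S → A j → ℝ) (hπ : IsPolicy π)
    -- each π'_i(s) maximizes the proximal objective over the simplex
    (hprox : ∀ (i : I) (s : S), IsProbVec (π' i s) ∧
      ∀ p : A i → ℝ, IsProbVec p →
        (∑ ai, p ai * Qfun δ P (u i) π (V i π) i s ai) -
            (1 / (2 * η)) * (l2norm (fun ai => p ai - π i s ai)) ^ 2 ≤
          (∑ ai, π' i s ai * Qfun δ P (u i) π (V i π) i s ai) -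
            (1 / (2 * η)) * (l2norm (fun ai => π' i s ai - π i s ai)) ^ 2) :
    ∀ (ν : S → ℝ), IsProbVec ν →
      ∑ i : I, ((∑ s, ν s * Φ (Function.update π i (π' i)) s) - (∑ s, ν s * Φ π s)) ≥
        (1 / (2 * η * (1 - δ))) *
            (∑ i : I, ∑ s : S, dvisit δ P (Function.update π i (π' i)) ν s *
              (l2norm (fun ai => π' i s ai - π i s ai)) ^ 2) -
          (Fintype.card I) * α := by
  intro ν hν
  have hl : ∀ (i : I) (s : S), (1 / (2 * η)) * (l2norm (fun ai => π' i s ai - π i s ai)) ^ 2 ≤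
      (V i (Function.update π i (π' i)) s - V i π s) -
        δ * ∑ t, transMat P (Function.update π i (π' i)) s t *
          (V i (Function.update π i (π' i)) t - V i π t) := by
    intro i s
    have hpol : IsPolicy (Function.update π i (π' i)) := by
      intro j t
      by_cases h : j = i
      · subst h; simpa using (hprox j t).1
      · simpa [Function.update_of_ne h] using hπ j t
    have a1 := hV i _ hpol s
    have a2 := hV i π hπ s
    have q1 := aux_Q δ P (u i) π (V i π) i (π' i) s
    have q2 := aux_Q δ P (u i) π (V i π) i (π i) s
    rw [Function.update_eq_self] at q2
    have m := (hprox i s).2 (π i s) (hπ i s)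
    have z : l2norm (fun ai => π i s ai - π i s ai) = 0 := by simp [l2norm]
    rw [z] at m
    simp only [mul_sub, Finset.sum_sub_distrib]
    linarith
  have hi : ∀ i : I, (1 / (2 * η * (1 - δ))) *
      (∑ s : S, dvisit δ P (Function.update π i (π' i)) ν s *
              (l2norm (fun ai => π' i s ai - π i s ai)) ^ 2) - α ≤
      (∑ s, ν s * Φ (Function.update π i (π' i)) s) - (∑ s, ν s * Φ π s) := by
    intro i
    have hpol : IsPolicy (Function.update π i (π' i)) := by
      intro j t
      by_cases h : j = i
      · subst h; simpa using (hprox j t).1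
      · simpa [Function.update_of_ne h] using hπ j t
    obtain ⟨t0, t1⟩ := aux_trans P hP _ hpol
    have key := aux_visit δ hδ hδ1 (Matrix.of (transMat P (Function.update π i (π' i)))) t0 t1 ν hν
      (fun s => V i (Function.update π i (π' i)) s - V i π s)
    have hd : (1 / (2 * η * (1 - δ))) *
      (∑ s : S, dvisit δ P (Function.update π i (π' i)) ν s *
              (l2norm (fun ai => π' i s ai - π i s ai)) ^ 2) ≤
        ∑ s, ν s * (V i (Function.update π i (π' i)) s - V i π s) := by
      rw [← key, Finset.mul_sum]
      refine Finset.sum_le_sum fun s _ => ?_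
      have hn : 0 ≤ ∑' k : ℕ, δ ^ k * ∑ s0, ν s0 *
          ((Matrix.of (transMat P (Function.update π i (π' i)))) ^ k) s0 s :=
        tsum_nonneg fun k => mul_nonneg (by positivity) (aux_x _ t0 t1 ν hν k s).1
      refine le_trans (le_of_eq ?_) (mul_le_mul_of_nonneg_left (hl i s) hn)
      unfold dvisit
      have : 1 - δ ≠ 0 := by linarith
      field_simp
    have hb : ∑ s, ν s * (V i (Function.update π i (π' i)) s - V i π s) - α ≤
        ∑ s, ν s * (Φ (Function.update π i (π' i)) s - Φ π s) := by
      have : ∑ s, ν s * (V i (Function.update π i (π' i)) s - V i π s) - α =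
          ∑ s, ν s * (V i (Function.update π i (π' i)) s - V i π s - α) := by
        simp only [mul_sub, Finset.sum_sub_distrib, ← Finset.sum_mul, hν.2, one_mul]
      rw [this]
      refine Finset.sum_le_sum fun s _ => mul_le_mul_of_nonneg_left ?_ (hν.1 s)
      have := (abs_le.1 (hpot s i π hπ (π' i) fun t => (hprox i t).1)).1
      linarith
    rw [← Finset.sum_sub_distrib]
    simp only [← mul_sub]
    linarith
  have := Finset.sum_le_sum fun i (_ : i ∈ Finset.univ) => hi i
  rw [Finset.sum_sub_distrib, ← Finset.mul_sum] at this
  simpa using this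
end

section
/- (Variational inequality for a projected gradient step on the simplex.) Let A be a finite nonempty set, let Δ(A) ⊂ ℝ^A denote the probability simplex (vectors with nonnegative entries summing to 1), and let δ ∈ (0,1). Suppose x ∈ Δ(A), q ∈ ℝ^A with ‖q‖₂ ≤ √|A|/(1−δ), and 0 < η ≤ (1−δ)/√|A|. Let y be the Euclidean orthogonal projection of x + η·q onto Δ(A). Then for every z ∈ Δ(A): ⟨z − x, q⟩ ≤ (3/η)·‖y − x‖₂. -/
open Finset

theorem aux_cs {α : Type*} [Fintype α] (f g : α → ℝ) :
    ∑ a, f a * g a ≤ l2norm f * l2norm g := by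
  unfold l2norm
  exact Real.sum_mul_le_sqrt_mul_sqrt Finset.univ f g

theorem aux_dist {α : Type*} [Fintype α] (y z : α → ℝ) (hy : IsProbVec y) (hz : IsProbVec z) :
    ∑ a, (z a - y a) ^ 2 ≤ 4 := by
  have key : ∀ w : α → ℝ, IsProbVec w → ∀ a, w a ≤ 1 := by
    intro w hw a
    rw [← hw.2]
    exact Finset.single_le_sum (fun i _ => hw.1 i) (Finset.mem_univ a)
  have h : ∑ a, (z a - y a) ^ 2 ≤ ∑ a, (z a + y a) := by
    refine Finset.sum_le_sum fun a _ => ?_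
    nlinarith [hy.1 a, hz.1 a, key y hy a, key z hz a, mul_nonneg (hy.1 a) (hz.1 a)]
  rw [Finset.sum_add_distrib, hz.2, hy.2] at h
  linarith

theorem aux_vi {α : Type*} [Fintype α] (p y z : α → ℝ) (hp : IsProjSimplex p y)
    (hz : IsProbVec z) : 0 ≤ ∑ a, (z a - y a) * (y a - p a) := by
  obtain ⟨hy, hmin⟩ := hp
  have hD := aux_dist y z hy hz
  have main : ∀ t : ℝ, 0 < t → t ≤ 1 →
      0 ≤ 2 * (∑ a, (z a - y a) * (y a - p a)) + t * 4 := by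
    intro t ht ht1
    have hw : IsProbVec (fun a => y a + t * (z a - y a)) := by
      refine ⟨fun a => ?_, ?_⟩
      · nlinarith [mul_nonneg ht.le (hz.1 a), mul_nonneg (sub_nonneg.2 ht1) (hy.1 a)]
      · rw [Finset.sum_add_distrib, ← Finset.mul_sum, Finset.sum_sub_distrib, hz.2, hy.2]
        ring
    have h := hmin _ hw
    unfold l2norm at h
    rw [Real.sqrt_le_sqrt_iff (Finset.sum_nonneg fun a _ => sq_nonneg _)] at h
    have e : ∑ a, (y a + t * (z a - y a) - p a) ^ 2 = ∑ a, (y a - p a) ^ 2 +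
        t * (2 * (∑ a, (z a - y a) * (y a - p a)) + t * ∑ a, (z a - y a) ^ 2) := by
      simp only [Finset.mul_sum, ← Finset.sum_add_distrib]
      exact Finset.sum_congr rfl fun a _ => by ring
    rw [e] at h
    have h2 : 0 ≤ 2 * (∑ a, (z a - y a) * (y a - p a)) + t * ∑ a, (z a - y a) ^ 2 :=
      nonneg_of_mul_nonneg_right (by linarith) ht
    have := mul_le_mul_of_nonneg_left hD ht.le
    linarith
  generalize ∑ a, (z a - y a) * (y a - p a) = c at main
  by_contra! hc
  have h1 := main (min 1 (-c / 4)) (lt_min one_pos (by linarith)) (min_le_left _ _)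
  have h2 := min_le_right 1 (-c / 4)
  linarith

/-- **Variational inequality for a projected gradient step on the simplex.** -/
theorem projected_gradient_step_variational_inequality
    {A : Type*} [Fintype A] [Nonempty A]
    (δ : ℝ) (hδ : 0 < δ) (hδ1 : δ < 1)
    (x : A → ℝ) (hx : IsProbVec x)
    (q : A → ℝ) (hq : l2norm q ≤ Real.sqrt (Fintype.card A) / (1 - δ))
    (η : ℝ) (hη : 0 < η) (hη' : η ≤ (1 - δ) / Real.sqrt (Fintype.card A))
    (y : A → ℝ) (hy : IsProjSimplex (fun a => x a + η * q a) y) :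
    ∀ z, IsProbVec z →
      dotp (fun a => z a - x a) q ≤ (3 / η) * l2norm (fun a => y a - x a) := by
  intro z hz
  have hvi := aux_vi _ y z hy hz
  have h1 := aux_cs (fun a => z a - y a) (fun a => y a - x a)
  have h2 := aux_cs (fun a => y a - x a) q
  have hD : l2norm (fun a => z a - y a) ≤ 2 :=
    Real.sqrt_le_iff.2 ⟨by norm_num, by linarith [aux_dist y z hy.1 hz]⟩
  have hN : 0 ≤ l2norm (fun a => y a - x a) := Real.sqrt_nonneg _
  have hC : 0 < Real.sqrt (Fintype.card A) :=
    Real.sqrt_pos.2 (by exact_mod_cast Fintype.card_pos)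
  have hd : 0 < 1 - δ := by linarith
  have hqη : η * l2norm q ≤ 1 := by
    calc η * l2norm q ≤ (1 - δ) / Real.sqrt (Fintype.card A) *
          (Real.sqrt (Fintype.card A) / (1 - δ)) :=
          mul_le_mul hη' hq (Real.sqrt_nonneg _) (by positivity)
      _ = 1 := by field_simp
  have e : η * dotp (fun a => z a - x a) q + ∑ a, (z a - y a) * (y a - (x a + η * q a)) =
      ∑ a, (z a - y a) * (y a - x a) + η * ∑ a, (y a - x a) * q a := by
    unfold dotp
    simp only [Finset.mul_sum, ← Finset.sum_add_distrib]
    exact Finset.sum_congr rfl fun a _ => by ring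
  have h3 := mul_le_mul_of_nonneg_left h2 hη.le
  have h4 := mul_le_mul_of_nonneg_right hD hN
  have h5 := mul_le_mul_of_nonneg_right hqη hN
  have h6 : η * dotp (fun a => z a - x a) q ≤ 3 * l2norm (fun a => y a - x a) := by
    nlinarith
  rw [div_mul_eq_mul_div, le_div_iff₀ hη]
  linarith
end

section
/- (Key inequality for Lemma technical (a): the entropy-regularized improvement between two softmax policies is controlled by their Euclidean distance.) Let A be a finite nonempty set, τ > 0, M ≥ 0, and Q, Q' : A → ℝ with |Q(a)| ≤ M and |Q'(a)| ≤ M for all a ∈ A. Define π(a) = exp(Q'(a)/τ)/∑_{a'} exp(Q'(a')/τ) and π⁺(a) = exp(Q(a)/τ)/∑_{a'} exp(Q(a')/τ), and ν(p) = ∑_{a} p(a)·log p(a). Then ( ∑_a π⁺(a)·Q(a) − τ·ν(π⁺) ) − ( ∑_a π(a)·Q(a) − τ·ν(π) ) ≤ √|A|·(3M + τ·log|A|)·‖π⁺ − π‖₂. -/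
open Finset

theorem softmax_aux_pos {A : Type*} [Fintype A] [Nonempty A] (τ : ℝ) (q : A → ℝ) (a : A) :
    0 < softmax τ q a := by
  unfold softmax
  exact div_pos (Real.exp_pos _) (Finset.sum_pos (fun i _ => Real.exp_pos _) Finset.univ_nonempty)

theorem softmax_aux_sum {A : Type*} [Fintype A] [Nonempty A] (τ : ℝ) (q : A → ℝ) :
    ∑ a, softmax τ q a = 1 := by
  have h : 0 < ∑ a', Real.exp (q a' / τ) :=
    Finset.sum_pos (fun i _ => Real.exp_pos _) Finset.univ_nonempty
  unfold softmax
  rw [← Finset.sum_div, div_self h.ne']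

theorem softmax_aux_log {A : Type*} [Fintype A] [Nonempty A] (τ : ℝ) (hτ : 0 < τ)
    (q : A → ℝ) (a : A) :
    τ * Real.log (softmax τ q a) = q a - τ * Real.log (∑ a', Real.exp (q a' / τ)) := by
  have h : 0 < ∑ a', Real.exp (q a' / τ) :=
    Finset.sum_pos (fun i _ => Real.exp_pos _) Finset.univ_nonempty
  unfold softmax
  rw [Real.log_div (Real.exp_pos _).ne' h.ne', Real.log_exp]
  field_simp

/-- **Key inequality:** the entropy-regularized improvement between two softmax policies is
controlled by their Euclidean distance. -/
theorem softmax_improvement_bounded_by_distance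
    {A : Type*} [Fintype A] [Nonempty A]
    (τ M : ℝ) (hτ : 0 < τ) (hM : 0 ≤ M)
    (Q Q' : A → ℝ) (hQ : ∀ a, |Q a| ≤ M) (hQ' : ∀ a, |Q' a| ≤ M) :
    ((∑ a, softmax τ Q a * Q a) - τ * negent (softmax τ Q)) -
        ((∑ a, softmax τ Q' a * Q a) - τ * negent (softmax τ Q')) ≤
      Real.sqrt (Fintype.card A) * (3 * M + τ * Real.log (Fintype.card A)) *
        l2norm (fun a => softmax τ Q a - softmax τ Q' a) := by
  have hp := softmax_aux_pos τ Q
  have hq := softmax_aux_pos τ Q'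
  have sp := softmax_aux_sum τ Q
  have sq := softmax_aux_sum τ Q'
  have lp := softmax_aux_log τ hτ Q
  have lq := softmax_aux_log τ hτ Q'
  generalize softmax τ Q = p at *
  generalize softmax τ Q' = q at *
  generalize Real.log (∑ a', Real.exp (Q a' / τ)) = L at *
  generalize Real.log (∑ a', Real.exp (Q' a' / τ)) = L' at *
  have gibbs : ∑ a, p a * (τ * Real.log (q a) - τ * Real.log (p a)) ≤ 0 := by
    have h1 : ∑ a, p a * (τ * Real.log (q a) - τ * Real.log (p a)) ≤ ∑ a, τ * (q a - p a) := by
      apply Finset.sum_le_sum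
      intro a _
      have h2 := Real.log_le_sub_one_of_pos (div_pos (hq a) (hp a))
      rw [Real.log_div (hq a).ne' (hp a).ne'] at h2
      have h3 := mul_le_mul_of_nonneg_left h2 (mul_pos hτ (hp a)).le
      have h4 : τ * p a * (q a / p a - 1) = τ * (q a - p a) := by
        have := (hp a).ne'
        field_simp
      nlinarith
    have h5 : ∑ a, τ * (q a - p a) = 0 := by
      rw [← Finset.mul_sum, Finset.sum_sub_distrib, sp, sq]; ring
    linarith
  have e1 : τ * negent p = ∑ a, p a * (τ * Real.log (p a)) := by
    unfold negent; rw [Finset.mul_sum]; exact Finset.sum_congr rfl fun a _ => by ring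
  have e2 : τ * negent q = ∑ a, q a * (τ * Real.log (q a)) := by
    unfold negent; rw [Finset.mul_sum]; exact Finset.sum_congr rfl fun a _ => by ring
  rw [e1, e2]
  simp only [lp, lq, mul_sub, Finset.sum_sub_distrib, ← Finset.sum_mul, sp, sq] at gibbs ⊢
  have key : ∑ a, (p a - q a) * (Q a - Q' a) ≤ ∑ a, |p a - q a| * (2 * M) := by
    apply Finset.sum_le_sum
    intro a _
    refine (le_abs_self _).trans ?_
    rw [abs_mul]
    apply mul_le_mul_of_nonneg_left _ (abs_nonneg _)
    have := abs_sub (Q a) (Q' a)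
    linarith [hQ a, hQ' a]
  have cs : ∑ a, |p a - q a| ≤ Real.sqrt (Fintype.card A) * l2norm (fun a => p a - q a) := by
    unfold l2norm
    rw [← Real.sqrt_mul (Nat.cast_nonneg _)]
    apply Real.le_sqrt_of_sq_le
    have := sq_sum_le_card_mul_sum_sq (s := (Finset.univ : Finset A)) (f := fun a => |p a - q a|)
    simpa only [sq_abs, Finset.card_univ] using this
  have hl : 0 ≤ τ * Real.log (Fintype.card A) := by
    apply mul_nonneg hτ.le (Real.log_natCast_nonneg _)
  have hn : 0 ≤ Real.sqrt (Fintype.card A) * l2norm (fun a => p a - q a) :=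
    mul_nonneg (Real.sqrt_nonneg _) (Real.sqrt_nonneg _)
  rw [← Finset.sum_mul] at key
  have k1 := mul_le_mul_of_nonneg_right cs (by linarith : 0 ≤ 2 * M)
  have k2 := mul_le_mul_of_nonneg_left
    (by linarith : 2 * M ≤ 3 * M + τ * Real.log (Fintype.card A)) hn
  simp only [sub_mul, mul_sub, Finset.sum_sub_distrib] at key
  linarith
end

section
/- (Instantaneous Nash-regret is controlled by the maximum one-stage smoothed improvement.) Consider a finite Markov game with smoothing parameter τ > 0 and write Ā = max_{i∈I}|A_i|. Fix a profile π and a probability distribution μ on S, and for each player i and state s define Δ_i(s) = max_{p∈Δ(A_i)} ( ∑_{a_i} p(a_i)·Q̃_i(s,a_i;π) − τ·ν(p) ) − ( ∑_{a_i} π_i(s,a_i)·Q̃_i(s,a_i;π) − τ·ν_i(s,π_i) ), the maximum being over the probability simplex Δ(A_i). Then for every player i: max_{π_i'} V_i(μ,(π_i',π_{-i})) − V_i(μ,π) ≤ (1/(1−δ))·( max_{j∈I, s∈S} Δ_j(s) + 2·τ·log(Ā) ), the left-hand maximum being over all policies π_i' of player i. -/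
open Finset

/-- Maximum one-stage improvement of the smoothed `Q`-value, `Δ_i(s)`:
the gap between the best entropy-regularized one-stage value and the current one. -/
noncomputable def improveDelta {S I : Type*} {A : I → Type*}
    [Fintype S] [Fintype I] [DecidableEq I] [∀ i, Fintype (A i)] [∀ i, DecidableEq (A i)]
    (δ τ : ℝ) (P : S → (∀ i, A i) → S → ℝ) (u : S → (∀ i, A i) → ℝ)
    (π : ∀ j, S → A j → ℝ) (Vt : S → ℝ) (i : I) (s : S) : ℝ :=
  (⨆ p : {p : A i → ℝ // IsProbVec p},
      ((∑ ai, p.1 ai * Qsmooth δ τ P u π Vt i s ai) - τ * negent p.1)) -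
    ((∑ ai, π i s ai * Qsmooth δ τ P u π Vt i s ai) - τ * negent (π i s))

lemma aux_negent_nonpos {α : Type*} [Fintype α] (p : α → ℝ) (hp : IsProbVec p) :
    negent p ≤ 0 := by
  unfold negent
  refine Finset.sum_nonpos fun a _ => ?_
  refine mul_nonpos_of_nonneg_of_nonpos (hp.1 a) (Real.log_nonpos (hp.1 a) ?_)
  rw [← hp.2]
  exact Finset.single_le_sum (fun b _ => hp.1 b) (Finset.mem_univ a)

lemma aux_negent_ge {α : Type*} [Fintype α] [Nonempty α] (p : α → ℝ) (hp : IsProbVec p) :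
    - negent p ≤ Real.log (Fintype.card α) := by
  have hn : (0 : ℝ) < Fintype.card α := by exact_mod_cast Fintype.card_pos
  have key : ∀ a, p a * (- Real.log (p a) - Real.log (Fintype.card α))
      ≤ 1 / (Fintype.card α : ℝ) - p a := by
    intro a
    rcases (hp.1 a).eq_or_lt with h | h
    · rw [← h]; simp
    · have h1 : - Real.log (p a) - Real.log (Fintype.card α)
          = Real.log (1 / (p a * Fintype.card α)) := by
        rw [one_div, Real.log_inv, Real.log_mul h.ne' hn.ne']; ring
      rw [h1]
      have h2 := Real.log_le_sub_one_of_pos (x := 1 / (p a * Fintype.card α)) (by positivity)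
      calc _ ≤ p a * (1 / (p a * Fintype.card α) - 1) := mul_le_mul_of_nonneg_left h2 h.le
        _ = _ := by field_simp
  have hs := Finset.sum_le_sum (fun a (_ : a ∈ Finset.univ) => key a)
  rw [Finset.sum_sub_distrib, hp.2] at hs
  simp only [mul_sub, Finset.sum_sub_distrib, ← Finset.sum_mul, hp.2, mul_neg,
    Finset.sum_neg_distrib, Finset.sum_const, Finset.card_univ, nsmul_eq_mul] at hs
  rw [mul_one_div_cancel hn.ne'] at hs
  unfold negent
  linarith

section AuxGame
variable {S I : Type*} [Fintype S] [Fintype I] [DecidableEq I]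
  {A : I → Type*} [∀ i, Fintype (A i)]

lemma aux_joint_sum (π : ∀ j, S → A j → ℝ) (hπ : IsPolicy π) (s : S) :
    ∑ a : ∀ j, A j, jointDist π s a = 1 := by
  unfold jointDist
  rw [← Fintype.prod_sum (fun i b => π i s b)]
  exact Finset.prod_eq_one fun i _ => (hπ i s).2

lemma aux_trans_nonneg (P : S → (∀ i, A i) → S → ℝ) (hP : IsKernel P)
    (π : ∀ j, S → A j → ℝ) (hπ : IsPolicy π) (s s' : S) : 0 ≤ transMat P π s s' :=
  Finset.sum_nonneg fun a _ =>
    mul_nonneg (Finset.prod_nonneg fun i _ => (hπ i s).1 _) ((hP s a).1 s')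

lemma aux_trans_sum (P : S → (∀ i, A i) → S → ℝ) (hP : IsKernel P)
    (π : ∀ j, S → A j → ℝ) (hπ : IsPolicy π) (s : S) : ∑ s', transMat P π s s' = 1 := by
  unfold transMat
  rw [Finset.sum_comm, ← aux_joint_sum π hπ s]
  refine Finset.sum_congr rfl fun a _ => ?_
  rw [← Finset.mul_sum, (hP s a).2, mul_one]

/-- contraction argument -/
lemma aux_contract [Nonempty S] (δ : ℝ) (hδ : 0 < δ) (hδ1 : δ < 1)
    (T : S → S → ℝ) (h0 : ∀ s s', 0 ≤ T s s') (h1 : ∀ s, ∑ s', T s s' = 1)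
    (W : S → ℝ) (c : ℝ) (h : ∀ s, W s ≤ c + δ * ∑ s', T s s' * W s') (s : S) :
    W s ≤ 1 / (1 - δ) * c := by
  obtain ⟨m, hm⟩ := Finite.exists_max W
  have h2 : ∑ s', T m s' * W s' ≤ W m := by
    calc _ ≤ ∑ s', T m s' * W m :=
          Finset.sum_le_sum fun s' _ => mul_le_mul_of_nonneg_left (hm s') (h0 _ _)
      _ = W m := by rw [← Finset.sum_mul, h1, one_mul]
  have h3 := h m
  have h4 : W m ≤ c + δ * W m := by nlinarith
  refine (hm s).trans ?_
  rw [one_div, inv_mul_eq_div, le_div_iff₀ (by linarith)]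
  linarith

lemma aux_Q_sum [∀ i, DecidableEq (A i)] (δ τ : ℝ) (P : S → (∀ i, A i) → S → ℝ)
    (u : S → (∀ i, A i) → ℝ) (π : ∀ j, S → A j → ℝ) (hπ : IsPolicy π) (Vt : S → ℝ) (i : I)
    (πi' : S → A i → ℝ) (hp : ∀ s, IsProbVec (πi' s)) (s : S) :
    ∑ ai, πi' s ai * Qsmooth δ τ P u π Vt i s ai =
      expPay u (Function.update π i πi') s - τ * negent (π i s)
        + δ * ∑ s', transMat P (Function.update π i πi') s s' * Vt s' := by
  have hpol : IsPolicy (Function.update π i πi') := by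
    intro j t
    by_cases h : j = i
    · subst h; simpa using hp t
    · simpa [h] using hπ j t
  have hj : ∀ a : ∀ j, A j, jointDist (Function.update π i πi') s a
      = πi' s (a i) * ∏ j ∈ Finset.univ.erase i, π j s (a j) := by
    intro a
    unfold jointDist
    rw [← Finset.mul_prod_erase _ _ (Finset.mem_univ i)]
    congr 1
    · simp
    · refine Finset.prod_congr rfl fun j hj => ?_
      rw [Function.update_of_ne (Finset.ne_of_mem_erase hj)]
  have hL : ∑ ai, πi' s ai * Qsmooth δ τ P u π Vt i s ai =
      ∑ a : ∀ j, A j, jointDist (Function.update π i πi') s a *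
        (u s a - τ * negent (π i s) + δ * ∑ s', P s a s' * Vt s') := by
    unfold Qsmooth
    simp only [Finset.mul_sum (s := (Finset.univ : Finset (∀ j, A j)))]
    rw [Finset.sum_comm]
    refine Finset.sum_congr rfl fun a _ => ?_
    simp only [mul_ite, mul_zero, Finset.sum_ite_eq, Finset.mem_univ, if_true]
    rw [hj]; ring
  have hT : ∑ s', transMat P (Function.update π i πi') s s' * Vt s'
      = ∑ a : ∀ j, A j, jointDist (Function.update π i πi') s a * ∑ s', P s a s' * Vt s' := by
    unfold transMat
    simp only [Finset.sum_mul, Finset.mul_sum]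
    rw [Finset.sum_comm]
    simp only [mul_assoc]
  rw [hL, hT]
  have h1 := aux_joint_sum _ hpol s
  unfold expPay
  simp only [mul_add, mul_sub, Finset.sum_add_distrib, Finset.sum_sub_distrib, ← Finset.sum_mul, h1,
    one_mul]
  congr 1
  rw [Finset.mul_sum]
  exact Finset.sum_congr rfl fun a _ => by ring

lemma aux_delta_ge [∀ i, DecidableEq (A i)] [∀ i, Nonempty (A i)] (δ τ : ℝ) (hτ : 0 < τ)
    (P : S → (∀ i, A i) → S → ℝ)
    (u : S → (∀ i, A i) → ℝ) (π : ∀ j, S → A j → ℝ) (Vt : S → ℝ) (i : I) (s : S)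
    (p : A i → ℝ) (hp : IsProbVec p) :
    ((∑ ai, p ai * Qsmooth δ τ P u π Vt i s ai) - τ * negent p) -
      ((∑ ai, π i s ai * Qsmooth δ τ P u π Vt i s ai) - τ * negent (π i s))
      ≤ improveDelta δ τ P u π Vt i s := by
  unfold improveDelta
  refine sub_le_sub_right ?_ _
  refine le_ciSup (f := fun p : {p : A i → ℝ // IsProbVec p} =>
    ((∑ ai, p.1 ai * Qsmooth δ τ P u π Vt i s ai) - τ * negent p.1)) ?_ ⟨p, hp⟩
  refine ⟨(∑ ai, |Qsmooth δ τ P u π Vt i s ai|) + τ * Real.log (Fintype.card (A i)), ?_⟩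
  rintro _ ⟨⟨q, hq⟩, rfl⟩
  have h1 := mul_le_mul_of_nonneg_left (aux_negent_ge q hq) hτ.le
  have h2 : ∑ ai, q ai * Qsmooth δ τ P u π Vt i s ai ≤ ∑ ai, |Qsmooth δ τ P u π Vt i s ai| := by
    refine Finset.sum_le_sum fun a _ => ?_
    have : q a ≤ 1 := by
      rw [← hq.2]; exact Finset.single_le_sum (fun b _ => hq.1 b) (Finset.mem_univ a)
    calc _ ≤ q a * |Qsmooth δ τ P u π Vt i s a| :=
          mul_le_mul_of_nonneg_left (le_abs_self _) (hq.1 a)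
      _ ≤ _ := mul_le_of_le_one_left (abs_nonneg _) this
  simp only
  linarith
end AuxGame

/-- **Instantaneous Nash-regret is controlled by the maximum one-stage smoothed improvement.** -/
theorem instantaneous_regret_le_max_improvement
    {S I : Type*} [Fintype S] [Nonempty S] [DecidableEq S]
    [Fintype I] [Nonempty I] [DecidableEq I]
    {A : I → Type*} [∀ i, Fintype (A i)] [∀ i, Nonempty (A i)] [∀ i, DecidableEq (A i)]
    (δ : ℝ) (hδ : 0 < δ) (hδ1 : δ < 1)
    (P : S → (∀ i, A i) → S → ℝ) (hP : IsKernel P)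
    (u : I → S → (∀ i, A i) → ℝ)
    (τ : ℝ) (hτ : 0 < τ)
    (Abar : ℕ) (hAbar : Abar = Finset.univ.sup' Finset.univ_nonempty
      (fun i : I => Fintype.card (A i)))
    (V Vt : I → (∀ j, S → A j → ℝ) → S → ℝ)
    (hV : ∀ i π, IsPolicy π → IsValueFun δ P (u i) π (V i π))
    (hVt : ∀ i π, IsPolicy π → IsSmoothedValueFun δ τ P (u i) π i (Vt i π))
    (π : ∀ j, S → A j → ℝ) (hπ : IsPolicy π)
    (μ : S → ℝ) (hμ : IsProbVec μ) :
    ∀ (i : I) (πi' : S → A i → ℝ), (∀ s, IsProbVec (πi' s)) →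
      (∑ s, μ s * V i (Function.update π i πi') s) - (∑ s, μ s * V i π s) ≤
        (1 / (1 - δ)) *
          ((Finset.univ.sup' Finset.univ_nonempty
              (fun js : I × S => improveDelta δ τ P (u js.1) π (Vt js.1 π) js.1 js.2)) +
            2 * τ * Real.log Abar) := by
  intro i πi' hp
  set D := (Finset.univ.sup' Finset.univ_nonempty
    (fun js : I × S => improveDelta δ τ P (u js.1) π (Vt js.1 π) js.1 js.2)) with hD
  have hDge : ∀ s, improveDelta δ τ P (u i) π (Vt i π) i s ≤ D := fun s =>
    Finset.le_sup' (fun js : I × S => improveDelta δ τ P (u js.1) π (Vt js.1 π) js.1 js.2)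
      (Finset.mem_univ (i, s))
  have hcard : Fintype.card (A i) ≤ Abar := by
    rw [hAbar]
    exact Finset.le_sup' (fun i : I => Fintype.card (A i)) (Finset.mem_univ i)
  have hc1 : 1 ≤ Fintype.card (A i) := Fintype.card_pos
  have hlog : Real.log (Fintype.card (A i)) ≤ Real.log Abar :=
    Real.log_le_log (by exact_mod_cast hc1) (by exact_mod_cast hcard)
  have hlog0 : 0 ≤ Real.log Abar := Real.log_natCast_nonneg _
  have hpol : IsPolicy (Function.update π i πi') := by
    intro j t
    by_cases h : j = i
    · subst h; simpa using hp t
    · simpa [h] using hπ j t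
  have hA : ∀ s, V i (Function.update π i πi') s - Vt i π s ≤ 1 / (1 - δ) * D := by
    refine aux_contract δ hδ hδ1 _ (aux_trans_nonneg P hP _ hpol) (aux_trans_sum P hP _ hpol)
      (fun s => V i (Function.update π i πi') s - Vt i π s) D ?_
    intro s
    have e1 := aux_Q_sum δ τ P (u i) π hπ (Vt i π) i πi' hp s
    have e2 := aux_Q_sum δ τ P (u i) π hπ (Vt i π) i (π i) (hπ i) s
    rw [Function.update_eq_self] at e2
    have e3 := hVt i π hπ s
    have e4 := hV i _ hpol s
    have e5 := aux_delta_ge δ τ hτ P (u i) π (Vt i π) i s (πi' s) (hp s)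
    have e6 := hDge s
    have e7 := mul_nonneg hτ.le (neg_nonneg.2 (aux_negent_nonpos _ (hp s)))
    simp only [mul_sub, Finset.sum_sub_distrib]
    linarith
  have hB : ∀ s, Vt i π s - V i π s ≤ 1 / (1 - δ) * (τ * Real.log Abar) := by
    refine aux_contract δ hδ hδ1 _ (aux_trans_nonneg P hP _ hπ) (aux_trans_sum P hP _ hπ)
      (fun s => Vt i π s - V i π s) _ ?_
    intro s
    have e3 := hVt i π hπ s
    have e4 := hV i _ hπ s
    have e7 := mul_le_mul_of_nonneg_left ((aux_negent_ge _ (hπ i s)).trans hlog) hτ.le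
    simp only [mul_sub, Finset.sum_sub_distrib]
    linarith
  have hpos : 0 < 1 / (1 - δ) := one_div_pos.2 (by linarith)
  have hC : ∀ s, V i (Function.update π i πi') s - V i π s
      ≤ 1 / (1 - δ) * (D + 2 * τ * Real.log Abar) := by
    intro s
    have := hA s
    have := hB s
    have := mul_nonneg hpos.le (mul_nonneg hτ.le hlog0)
    linarith
  rw [← Finset.sum_sub_distrib]
  calc _ = ∑ s, μ s * (V i (Function.update π i πi') s - V i π s) := by simp only [mul_sub]
    _ ≤ ∑ s, μ s * (1 / (1 - δ) * (D + 2 * τ * Real.log Abar)) :=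
        Finset.sum_le_sum fun s _ => mul_le_mul_of_nonneg_left (hC s) (hμ.1 s)
    _ = _ := by rw [← Finset.sum_mul, hμ.2, one_mul]
end
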